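/- Let F be a number field, and M a finite nontrivial continuous module for the absolute Galois group G_F. Then the continuous cohomology group H^1(G_F, M) is infinite. -/

import Mathlib

/-- Continuous 1-cocycles of a topological group `G` with values in a discrete
`G`-module `M`. -/
def contCocycles (G M : Type*) [Group G] [TopologicalSpace G] [AddCommGroup M]
    [DistribMulAction G M] : Set (G → M) :=
  {c | (@Continuous G M _ ⊥ c) ∧ ∀ g h : G, c (g * h) = c g + g • c h}

/-- Two cocycles are cohomologous if they differ by a coboundary `g ↦ g·m − m`.
`H¹(G, M)` (continuous cohomology) is the quotient of the continuous cocycles by this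
relation. -/
def cohomologous (G M : Type*) [Group G] [TopologicalSpace G] [AddCommGroup M]
    [DistribMulAction G M] (c c' : contCocycles G M) : Prop :=
  ∃ m : M, ∀ g : G, c'.1 g = c.1 g + (g • m - m)

/-!
Let `p` be a prime dividing the order of `M`, let `L` be a finite Galois extension of `F` over
which `M` and the `p`-th roots of unity become trivial modules, and let `N` be the subgroup of
`G_F` fixing `L`. A homomorphism `θ : μ_p → M` sends the Kummer character of `α ∈ Lˣ` to a cocycle
on `N`, and this is corestricted to `G_F`. If `ψ` is a character of `M` with `ψ ∘ θ ≠ 1`, then `ψ`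
of the corestriction is, on `N`, the Kummer character of a product `∏ σ(α) ^ c_σ` over
`σ ∈ Gal(L/F)` with `p ∤ c₁`. When `α` is a uniformizer at some prime of `L` at which its other
conjugates are units, this product has valuation `c₁` there, so it is not a `p`-th power and the
class is nonzero. Approximation at primes of `L` with trivial decomposition group yields a sequence
`a` all of whose quotients `a n / a m`, `m < n`, are of this kind, hence infinitely many classes.
-/

open NumberField IsDedekindDomain Filter
open scoped Pointwise Topology

section SplitPrimes

variable {L : Type*} [Field L] [NumberField L]

theorem exists_not_isUnit_one_sub_natCast_mul {x : 𝓞 L} (hx : x ≠ 0) :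
    ∃ k : ℕ, ¬ IsUnit (1 - k * x) := by
  have hpos (w : InfinitePlace L) : 0 < w x := w.pos_iff.mpr (by simpa using hx)
  obtain ⟨k, hk⟩ : ∃ k : ℕ, ∀ w : InfinitePlace L, 2 < k * w x :=
    (Filter.eventually_all.mpr fun w ↦ (tendsto_natCast_atTop_atTop.atTop_mul_const
      (hpos w)).eventually_gt_atTop 2).exists
  have hgt (w : InfinitePlace L) : 1 < w (1 - k * x : 𝓞 L) := by
    have htri := norm_sub_norm_le (k * w.embedding x) 1
    rw [norm_sub_rev, norm_mul, Complex.norm_natCast, norm_one, w.norm_embedding_eq] at htri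
    rw [← w.norm_embedding_eq]
    push_cast
    rw [map_sub, map_one, map_mul, map_natCast]
    linarith [hk w]
  have hprod : 1 < ∏ w : InfinitePlace L, w (1 - k * x : 𝓞 L) ^ w.mult := by
    simpa using Finset.prod_lt_prod_of_nonempty (fun _ _ ↦ one_pos)
      (fun w _ ↦ one_lt_pow₀ (hgt w) w.mult_ne_zero) Finset.univ_nonempty
  refine ⟨k, fun hunit ↦ hprod.ne' ?_⟩
  rw [InfinitePlace.prod_eq_abs_norm, ← RingOfIntegers.coe_norm]
  exact_mod_cast isUnit_iff_norm.mp hunit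

theorem exists_ringOfIntegers_ne_zero_stabilizer_eq_bot (F : Type*) [Field F] [NumberField F]
    [Algebra F L] : ∃ θ : 𝓞 L, θ ≠ 0 ∧ MulAction.stabilizer Gal(L/F) θ = ⊥ := by
  let α := (Field.powerBasisOfFiniteOfSeparable F L).gen
  have hα {τ : Gal(L/F)} (h : τ α = α) : τ = 1 :=
    AlgEquiv.coe_toAlgHom_injective ((Field.powerBasisOfFiniteOfSeparable F L).algHom_ext h)
  by_cases hα₀ : α = 0
  · exact ⟨1, one_ne_zero, (Subgroup.eq_bot_iff_forall _).mpr fun τ _ ↦ hα (by simp [hα₀])⟩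
  obtain ⟨n, hn, hint⟩ := IsAlgebraic.exists_integral_multiple
    ((IsFractionRing.isAlgebraic_iff ℤ ℚ L).mpr (Algebra.IsAlgebraic.isAlgebraic α))
  refine ⟨⟨n • α, hint⟩, fun h ↦ smul_ne_zero hn hα₀ (congrArg ((↑) : 𝓞 L → L) h),
    (Subgroup.eq_bot_iff_forall _).mpr fun τ hτ ↦ hα ?_⟩
  have : τ (n • α) = n • α := congrArg ((↑) : 𝓞 L → L) hτ
  exact smul_right_injective L hn (by simpa only [map_zsmul] using this)

theorem stabilizer_ideal_eq_bot_of_smul_sub_notMem {R H : Type*} [CommRing R] [Group H]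
    [MulSemiringAction H R] {P : Ideal R} {x : R} (hx : x ∈ P)
    (h : ∀ τ : H, τ ≠ 1 → τ • x - x ∉ P) : MulAction.stabilizer H P = ⊥ := by
  refine (Subgroup.eq_bot_iff_forall _).mpr fun τ hτ ↦ of_not_not fun hne ↦ h τ hne ?_
  have hτx := Ideal.smul_mem_pointwise_smul τ x P hx
  rw [MulAction.mem_stabilizer_iff.mp hτ] at hτx
  exact P.sub_mem hτx hx

/-- With `θ` moved by every `τ ≠ 1`, take a prime dividing `1 - k * m * θ`: modulo it `θ` is the
inverse of a rational integer, so an automorphism preserving the prime fixes `θ` modulo it, which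
is excluded once `m` is divisible by all `τ • θ - θ`. -/
theorem exists_heightOneSpectrum_notMem_stabilizer_eq_bot (F : Type*) [Field F] [NumberField F]
    [Algebra F L] {c : 𝓞 L} (hc : c ≠ 0) :
    ∃ v : HeightOneSpectrum (𝓞 L),
      c ∉ v.asIdeal ∧ MulAction.stabilizer Gal(L/F) v.asIdeal = ⊥ := by
  classical
  obtain ⟨θ, hθ₀, hθ⟩ := exists_ringOfIntegers_ne_zero_stabilizer_eq_bot (L := L) F
  let D : 𝓞 L := ∏ τ : Gal(L/F) with τ ≠ 1, (τ • θ - θ)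
  have hD : D ≠ 0 := Finset.prod_ne_zero_iff.mpr fun τ hτ h ↦
    (Finset.mem_filter.mp hτ).2 <| Subgroup.mem_bot.mp <| hθ ▸ sub_eq_zero.mp h
  let m := Ideal.absNorm (Ideal.span {c * D})
  have hm : m ≠ 0 := by simp [m, hc, hD]
  have hdvd : c * D ∣ (m : 𝓞 L) := Ideal.mem_span_singleton.mp (Ideal.absNorm_mem _)
  obtain ⟨k, hk⟩ := exists_not_isUnit_one_sub_natCast_mul
    (mul_ne_zero (Nat.cast_ne_zero.mpr hm) hθ₀)
  obtain ⟨P, hP, huP⟩ := exists_max_ideal_of_mem_nonunits hk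
  have hkm : (k : 𝓞 L) * m ∉ P := fun h ↦ hP.ne_top <| (Ideal.eq_top_iff_one P).mpr <| by
    simpa [mul_assoc] using P.add_mem huP (P.mul_mem_right θ h)
  have hcD : c * D ∉ P := fun h ↦ hkm (P.mul_mem_left _ (P.mem_of_dvd hdvd h))
  have hP₀ := Ring.ne_bot_of_isMaximal_of_not_isField hP (RingOfIntegers.not_isField L)
  refine ⟨⟨P, hP.isPrime, hP₀⟩, fun h ↦ hcD (P.mul_mem_right D h),
    stabilizer_ideal_eq_bot_of_smul_sub_notMem huP fun τ hτ hmem ↦ ?_⟩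
  have hdiff : τ • (1 - (k : 𝓞 L) * (m * θ)) - (1 - k * (m * θ)) = -(k * m) * (τ • θ - θ) := by
    have hnat (j : ℕ) : τ • (j : 𝓞 L) = j := map_natCast (MulSemiringAction.toRingHom _ (𝓞 L) τ) j
    rw [smul_sub, smul_mul', smul_mul', smul_one, hnat, hnat]
    ring
  rw [hdiff] at hmem
  have hθτ : τ • θ - θ ∈ P := (hP.isPrime.mem_or_mem hmem).resolve_left (mt P.neg_mem_iff.mp hkm)
  exact hcD <| P.mul_mem_left c <| P.mem_of_dvd (Finset.dvd_prod_of_mem _ (by simpa using hτ)) hθτ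

end SplitPrimes

section Valuations

open WithZero

theorem exists_intValuation_eq_exp_neg_one_and_intValuation_smul_eq_one {R H : Type*}
    [CommRing R] [IsDedekindDomain R] [Group H] [Finite H] [MulSemiringAction H R]
    {v : HeightOneSpectrum R} (hv : MulAction.stabilizer H v.asIdeal = ⊥) :
    ∃ a : R, v.intValuation a = exp (-1 : ℤ) ∧ ∀ τ : H, τ ≠ 1 → v.intValuation (τ • a) = 1 := by
  classical
  have := Fintype.ofFinite H
  have hprime (σ : H) : Prime (σ • v.asIdeal) :=
    have := v.isPrime
    Ideal.prime_of_isPrime ((smul_ne_zero_iff_ne σ).mpr v.ne_bot) inferInstance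
  have hinj : Function.Injective fun σ : H ↦ σ • v.asIdeal := fun σ τ h ↦ by
    have : τ⁻¹ * σ ∈ MulAction.stabilizer H v.asIdeal := by
      simpa [mul_smul, inv_smul_eq_iff] using h
    exact (inv_mul_eq_one.mp (Subgroup.mem_bot.mp (hv ▸ this))).symm
  obtain ⟨π, hπ⟩ := v.intValuation_exists_uniformizer
  obtain ⟨a, ha⟩ := IsDedekindDomain.exists_forall_sub_mem_ideal (s := Finset.univ)
    (fun σ : H ↦ σ • v.asIdeal) (fun _ ↦ 2) (fun σ _ ↦ hprime σ) (fun _ _ _ _ ↦ hinj.ne)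
    (fun σ ↦ if σ.1 = 1 then π else 1)
  refine ⟨a, ?_, fun τ hτ ↦ HeightOneSpectrum.intValuation_eq_one_iff.mpr fun hmem ↦ ?_⟩
  · have hmem : a - π ∈ v.asIdeal ^ 2 := by simpa using ha 1 (Finset.mem_univ _)
    have hlt : v.intValuation (a - π) < v.intValuation π :=
      ((v.intValuation_le_pow_iff_mem _ 2).mpr hmem).trans_lt (hπ ▸ exp_lt_exp.mpr (by norm_num))
    rw [← hπ, ← Valuation.map_add_eq_of_lt_right _ hlt, sub_add_cancel]
  · have hsub : a - 1 ∈ τ⁻¹ • v.asIdeal := by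
      simpa [hτ] using Ideal.pow_le_self two_ne_zero (ha τ⁻¹ (Finset.mem_univ _))
    rw [Ideal.mem_inv_pointwise_smul_iff, smul_sub, smul_one] at hsub
    have hone : (1 : R) ∈ v.asIdeal := by simpa using v.asIdeal.sub_mem hmem hsub
    exact v.isPrime.ne_top ((Ideal.eq_top_iff_one _).mpr hone)

theorem dvd_of_pow_eq_prod_zpow {K ι : Type*} [Field K] [Fintype ι] (v : Valuation K ℤᵐ⁰)
    {α : ι → K} {i₀ : ι} (h₀ : v (α i₀) = exp (-1 : ℤ)) (h : ∀ i ≠ i₀, v (α i) = 1)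
    {c : ι → ℤ} {n : ℕ} {γ : K} (hγ : γ ^ n = ∏ i, α i ^ c i) : (n : ℤ) ∣ c i₀ := by
  have hv : v γ ^ n = exp (-1 : ℤ) ^ c i₀ := by
    rw [← map_pow, hγ, map_prod, Finset.prod_eq_single i₀ (by simp +contextual [h]) (by simp),
      map_zpow₀, h₀]
  have hlog := congrArg log hv
  rw [log_pow, log_zpow, log_exp] at hlog
  exact ⟨-log (v γ), by simpa using (congrArg (- ·) hlog).symm⟩

end Valuations

section IsolatedUniformizer

open WithZero

variable (F : Type*) {L : Type*} [Field F] [NumberField F] [Field L] [NumberField L] [Algebra F L]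

/-- `α` is a uniformizer at the prime `v` of `L`, while its other conjugates over `F` are units
at `v`. -/
def IsIsolatedUniformizer (v : HeightOneSpectrum (𝓞 L)) (α : L) : Prop :=
  v.valuation L α = exp (-1 : ℤ) ∧ ∀ τ : Gal(L/F), τ ≠ 1 → v.valuation L (τ α) = 1

theorem exists_isIsolatedUniformizer_div (s : Finset (𝓞 L)) (hs : ∀ a ∈ s, a ≠ 0) :
    ∃ b : 𝓞 L, b ≠ 0 ∧ ∀ a ∈ s, ∃ v, IsIsolatedUniformizer F v (b / a : L) := by
  have hc : ∏ a ∈ s, ∏ τ : Gal(L/F), τ • a ≠ 0 := by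
    simpa [Finset.prod_ne_zero_iff, smul_eq_zero_iff_eq] using hs
  obtain ⟨v, hcv, hv⟩ := exists_heightOneSpectrum_notMem_stabilizer_eq_bot F hc
  obtain ⟨b, hb, hbτ⟩ := exists_intValuation_eq_exp_neg_one_and_intValuation_smul_eq_one hv
  refine ⟨b, fun h ↦ exp_ne_zero (hb.symm.trans (by rw [h, map_zero])), fun a ha ↦ ⟨v, ?_⟩⟩
  have hval (τ : Gal(L/F)) (x : 𝓞 L) : v.valuation L (τ x) = v.intValuation (τ • x) :=
    v.valuation_of_algebraMap (K := L) (τ • x)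
  have ha' (τ : Gal(L/F)) : v.intValuation (τ • a) = 1 := by
    refine HeightOneSpectrum.intValuation_eq_one_iff.mpr fun hmem ↦ hcv ?_
    exact v.asIdeal.mem_of_dvd ((Finset.dvd_prod_of_mem (fun τ : Gal(L/F) ↦ τ • a)
      (Finset.mem_univ τ)).trans (Finset.dvd_prod_of_mem (fun a ↦ ∏ τ : Gal(L/F), τ • a) ha)) hmem
  have hdiv (τ : Gal(L/F)) : v.valuation L (τ (b / a)) = v.intValuation (τ • b) := by
    rw [map_div₀, map_div₀, hval, hval, ha', div_one]
  exact ⟨by simpa [hb] using hdiv 1, fun τ hτ ↦ (hdiv τ).trans (hbτ τ hτ)⟩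

theorem exists_seq_isIsolatedUniformizer_div : ∃ a : ℕ → 𝓞 L, (∀ n, a n ≠ 0) ∧
    ∀ m n, m < n → ∃ v, IsIsolatedUniformizer F v (a n / a m : L) :=
  exists_seq_of_forall_finset_exists (· ≠ 0) _ (exists_isIsolatedUniformizer_div F)

end IsolatedUniformizer

section Cocycles

open groupCohomology

variable {G M : Type*} [Group G] [AddCommGroup M] [DistribMulAction G M]

/-- The element `n` of `N` with `g * r x = r (g • x) * n`, where `r : G ⧸ N → G` is the system of
coset representatives `Quotient.out`. -/
noncomputable def cosetCocycle (N : Subgroup G) (g : G) (x : G ⧸ N) : N :=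
  ⟨(g • x).out⁻¹ * (g * x.out), QuotientGroup.eq.mp <| by
    rw [QuotientGroup.out_eq', ← smul_eq_mul, MulAction.Quotient.coe_smul_out]⟩

theorem out_mul_cosetCocycle (N : Subgroup G) (g : G) (x : G ⧸ N) :
    (g • x).out * (cosetCocycle N g x : G) = g * x.out :=
  mul_inv_cancel_left _ _

theorem cosetCocycle_mul (N : Subgroup G) (g h : G) (x : G ⧸ N) :
    cosetCocycle N (g * h) x = cosetCocycle N g (h • x) * cosetCocycle N h x := by
  ext
  simp only [cosetCocycle, Subgroup.coe_mul, mul_smul]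
  group

/-- The corestriction (transfer) from `N` to `G` of inhomogeneous `1`-cochains, computed with the
system of coset representatives `Quotient.out`. -/
noncomputable def corestriction (N : Subgroup G) [Fintype (G ⧸ N)] (f : N → M) (g : G) : M :=
  ∑ x : G ⧸ N, (g • x).out • f (cosetCocycle N g x)

theorem isCocycle₁_corestriction (N : Subgroup G) [Fintype (G ⧸ N)] {f : N → M}
    (hf : IsCocycle₁ f) : IsCocycle₁ (corestriction N f) := fun g h ↦ by
  have hreindex : corestriction N f g =
      ∑ x : G ⧸ N, (g • h • x).out • f (cosetCocycle N g (h • x)) :=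
    (Equiv.sum_comp (MulAction.toPerm h) _).symm
  rw [hreindex, corestriction, corestriction, Finset.smul_sum, ← Finset.sum_add_distrib]
  refine Finset.sum_congr rfl fun x _ ↦ ?_
  rw [cosetCocycle_mul, hf, smul_add, Subgroup.smul_def, mul_smul g h x, ← mul_smul,
    out_mul_cosetCocycle, mul_smul]

theorem corestriction_sub (N : Subgroup G) [Fintype (G ⧸ N)] (f f' : N → M) :
    corestriction N (f - f') = corestriction N f - corestriction N f' := by
  ext g
  simp only [corestriction, Pi.sub_apply, smul_sub, Finset.sum_sub_distrib]

theorem corestriction_coe (N : Subgroup G) [N.Normal] [Fintype (G ⧸ N)] (f : N → M) (n : N) :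
    corestriction N f n = ∑ x : G ⧸ N, x.out • f (MulAut.conjNormal x.out⁻¹ n) := by
  refine Finset.sum_congr rfl fun x _ ↦ ?_
  have hx : (n : G) • x = x := by
    induction x using QuotientGroup.induction_on with | H z =>
    rw [MulAction.Quotient.smul_mk, smul_eq_mul, QuotientGroup.mk_mul,
      (QuotientGroup.eq_one_iff _).mpr n.2, one_mul]
  have hconj : cosetCocycle N n x = MulAut.conjNormal x.out⁻¹ n := by
    ext
    simp only [cosetCocycle, hx, MulAut.conjNormal_apply, inv_inv, mul_assoc]
  rw [hx, hconj]

variable [TopologicalSpace G]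

theorem mem_contCocycles_of_eventually_eq_zero [ContinuousMul G] {c : G → M} (hc : IsCocycle₁ c)
    (h₀ : ∀ᶠ g in 𝓝 1, c g = 0) : c ∈ contCocycles G M := by
  let _ : TopologicalSpace M := ⊥
  have : DiscreteTopology M := ⟨rfl⟩
  refine ⟨continuous_iff_continuousAt.mpr fun g ↦ ?_, fun g h ↦ (hc g h).trans (add_comm _ _)⟩
  have hg : Tendsto (g⁻¹ * ·) (𝓝 g) (𝓝 1) := by
    have : Continuous (g⁻¹ * ·) := by fun_prop
    simpa using this.tendsto g
  rw [ContinuousAt, nhds_discrete M, tendsto_pure]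
  filter_upwards [hg.eventually h₀] with h hh
  simpa [hh] using hc g (g⁻¹ * h)

theorem corestriction_mem_contCocycles [IsTopologicalGroup G] {N : Subgroup G} [N.Normal]
    [Fintype (G ⧸ N)] (hN : IsOpen (N : Set G)) {f : N → M} (hf : IsCocycle₁ f)
    (h₀ : ∀ᶠ n in 𝓝 1, f n = 0) : corestriction N f ∈ contCocycles G M := by
  refine mem_contCocycles_of_eventually_eq_zero (isCocycle₁_corestriction N hf) ?_
  rw [← N.coe_one, ← hN.isOpenEmbedding_subtypeVal.map_nhds_eq, eventually_map]
  have hconj (x : G ⧸ N) : Tendsto (MulAut.conjNormal x.out⁻¹ : N → N) (𝓝 1) (𝓝 1) := by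
    have : Continuous (MulAut.conjNormal x.out⁻¹ : N → N) := by
      refine continuous_induced_rng.mpr ?_
      simp only [Function.comp_def, MulAut.conjNormal_apply]
      fun_prop
    simpa using this.tendsto 1
  filter_upwards [eventually_all.mpr fun x ↦ (hconj x).eventually h₀] with n hn
  rw [corestriction_coe]
  exact Finset.sum_eq_zero fun x _ ↦ by rw [hn x, smul_zero]

theorem eq_of_quotMk_cohomologous_eq {c c' : contCocycles G M}
    (h : Quot.mk (cohomologous G M) c = Quot.mk (cohomologous G M) c') {g : G}
    (hg : ∀ m : M, g • m = m) : c.1 g = c'.1 g :=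
  congrArg (Quot.lift (fun c : contCocycles G M ↦ c.1 g)
    fun c c' ⟨m, hm⟩ ↦ by rw [hm, hg, sub_self, add_zero]) h

end Cocycles

section RootsOfUnity

theorem exists_monoidHom_rootsOfUnity_comp_ne_one (Ω A : Type*) [Field Ω] [IsAlgClosed Ω]
    [CharZero Ω] [CommGroup A] [Finite A] {p : ℕ} [Fact p.Prime] (hp : p ∣ Nat.card A) :
    ∃ (θ : rootsOfUnity p Ω →* A) (ψ : A →* Ωˣ), ψ.comp θ ≠ 1 := by
  obtain ⟨a, ha⟩ := exists_prime_orderOf_dvd_card' p hp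
  obtain ⟨ζ, hζ⟩ := HasEnoughRootsOfUnity.exists_primitiveRoot Ω p
  let e : rootsOfUnity p Ω ≃* Subgroup.zpowers a :=
    mulEquivOfPrimeCardEq hζ.card_rootsOfUnity ((Nat.card_zpowers a).trans ha)
  have : NeZero (Monoid.exponent A) := ⟨Monoid.exponent_ne_zero_of_finite⟩
  have ha₁ : a ≠ 1 := fun h ↦ (Fact.out : p.Prime).ne_one (by rw [← ha, h, orderOf_one])
  obtain ⟨ψ, hψ⟩ := CommGroup.exists_apply_ne_one_of_hasEnoughRootsOfUnity A Ω ha₁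
  refine ⟨(Subgroup.zpowers a).subtype.comp e, ψ, fun h ↦ hψ ?_⟩
  simpa using DFunLike.congr_fun h (e.symm ⟨a, Subgroup.mem_zpowers a⟩)

theorem exists_forall_eq_zpow_of_rootsOfUnity {R : Type*} [CommRing R] [IsDomain R] {n : ℕ}
    [NeZero n] (χ : rootsOfUnity n R →* Rˣ) :
    ∃ c : ℤ, ∀ z : rootsOfUnity n R, χ z = (z : Rˣ) ^ c := by
  have hχ (z) : χ z ∈ rootsOfUnity n R := by
    have hz : z ^ n = 1 := Subtype.ext z.2
    rw [mem_rootsOfUnity, ← map_pow, hz, map_one]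
  obtain ⟨c, hc⟩ := (χ.codRestrict _ hχ).map_cyclic
  exact ⟨c, fun z ↦ congrArg Subtype.val (hc z)⟩

variable {F Ω M : Type*} [Field F] [Field Ω] [Algebra F Ω] [AddCommGroup M]
  [DistribMulAction Gal(Ω/F) M]

theorem exists_forall_apply_smul_eq_smul_zpow {n : ℕ} [NeZero n]
    (θ : rootsOfUnity n Ω →* Multiplicative M) (ψ : Multiplicative M →* Ωˣ) (σ : Gal(Ω/F)) :
    ∃ c : ℤ, ∀ z : rootsOfUnity n Ω, ψ (.ofAdd (σ • (θ z).toAdd)) = (σ • (z : Ωˣ)) ^ c := by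
  let θσ : rootsOfUnity n Ω →* Multiplicative M :=
    (DistribSMul.toAddMonoidHom M σ).toMultiplicative.comp (θ.comp (restrictRootsOfUnity σ⁻¹ n))
  obtain ⟨c, hc⟩ := exists_forall_eq_zpow_of_rootsOfUnity (ψ.comp θσ)
  refine ⟨c, fun z ↦ ?_⟩
  have hz : restrictRootsOfUnity σ⁻¹ n (restrictRootsOfUnity σ n z) = z := by
    ext
    exact σ.symm_apply_apply _
  refine Eq.trans ?_ (hc (restrictRootsOfUnity σ n z))
  simp [θσ, hz]

end RootsOfUnity

section Kummer

open groupCohomology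

variable {H Ω M : Type*} [Group H] [CommMonoid Ω] [MulDistribMulAction H Ωˣ] {p : ℕ}

/-- The units of `Ω` whose `p`-th power is fixed by `H`: the Kummer generators. -/
def kummerSubgroup (H Ω : Type*) [Group H] [CommMonoid Ω] [MulDistribMulAction H Ωˣ] (p : ℕ) :
    Subgroup Ωˣ :=
  (FixedPoints.subgroup H Ωˣ).comap (powMonoidHom p)

theorem mem_kummerSubgroup {β : Ωˣ} : β ∈ kummerSubgroup H Ω p ↔ ∀ h : H, h • β ^ p = β ^ p :=
  Iff.rfl

theorem smul_div_mem_rootsOfUnity {β : Ωˣ} (hβ : β ∈ kummerSubgroup H Ω p) (h : H) :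
    h • β / β ∈ rootsOfUnity p Ω := by
  rw [mem_rootsOfUnity, div_pow, ← smul_pow', mem_kummerSubgroup.mp hβ h, div_self']

/-- The Kummer pairing `β ↦ (h ↦ h • β / β)`, for `H` acting trivially on the `p`-th roots of
unity. -/
def kummerHom (hμ : ∀ (h : H) (z : rootsOfUnity p Ω), h • (z : Ωˣ) = z) :
    kummerSubgroup H Ω p →* H →* rootsOfUnity p Ω :=
  .mk' (fun β ↦ .mk' (fun h ↦ ⟨h • (β : Ωˣ) / β, smul_div_mem_rootsOfUnity β.2 h⟩) fun g h ↦ by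
      ext1
      have hfix : g • h • (β : Ωˣ) / g • (β : Ωˣ) = h • (β : Ωˣ) / β :=
        (smul_div' ..).symm.trans (hμ g ⟨_, smul_div_mem_rootsOfUnity β.2 h⟩)
      simp only [Subgroup.coe_mul]
      rw [mul_smul, ← hfix, mul_comm, div_mul_div_cancel])
    fun β β' ↦ by
      ext h : 2
      simp only [Subgroup.coe_mul, MonoidHom.mk'_apply, MonoidHom.mul_apply, smul_mul',
        mul_div_mul_comm]

theorem coe_kummerHom_apply (hμ : ∀ (h : H) (z : rootsOfUnity p Ω), h • (z : Ωˣ) = z)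
    (β : kummerSubgroup H Ω p) (h : H) : (kummerHom hμ β h : Ωˣ) = h • (β : Ωˣ) / β :=
  rfl

variable [AddCommGroup M]

/-- The Kummer cocycle of `β` with its values moved from the `p`-th roots of unity to `M` by `θ`. -/
def kummerCocycle (hμ : ∀ (h : H) (z : rootsOfUnity p Ω), h • (z : Ωˣ) = z)
    (θ : rootsOfUnity p Ω →* Multiplicative M) (β : kummerSubgroup H Ω p) (h : H) : M :=
  (θ (kummerHom hμ β h)).toAdd

variable (hμ : ∀ (h : H) (z : rootsOfUnity p Ω), h • (z : Ωˣ) = z)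
  (θ : rootsOfUnity p Ω →* Multiplicative M)

theorem kummerCocycle_div (β β' : kummerSubgroup H Ω p) :
    kummerCocycle hμ θ (β / β') = kummerCocycle hμ θ β - kummerCocycle hμ θ β' := by
  ext h
  simp only [kummerCocycle, map_div, MonoidHom.div_apply, toAdd_div, Pi.sub_apply]

theorem isCocycle₁_kummerCocycle [DistribMulAction H M] (hM : ∀ (h : H) (m : M), h • m = m)
    (β : kummerSubgroup H Ω p) : IsCocycle₁ (kummerCocycle hμ θ β) := fun g h ↦ by
  rw [hM, kummerCocycle, map_mul, map_mul, mul_comm]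
  rfl

theorem kummerCocycle_eq_zero_of_smul_eq {β : kummerSubgroup H Ω p} {h : H}
    (hβ : h • (β : Ωˣ) = β) : kummerCocycle hμ θ β h = 0 := by
  have : kummerHom hμ β h = 1 := Subtype.ext (by rw [coe_kummerHom_apply, hβ, div_self']; rfl)
  rw [kummerCocycle, this, map_one, toAdd_one]

end Kummer

section CorestrictionKummer

variable {G Ω M : Type*} [Group G] [CommMonoid Ω] [MulDistribMulAction G Ωˣ] [AddCommGroup M]
  [DistribMulAction G M] {p : ℕ}

theorem apply_corestriction_kummerCocycle {N : Subgroup G} [N.Normal] [Fintype (G ⧸ N)]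
    (hμ : ∀ (n : N) (z : rootsOfUnity p Ω), n • (z : Ωˣ) = z)
    (θ : rootsOfUnity p Ω →* Multiplicative M) (ψ : Multiplicative M →* Ωˣ) {c : G ⧸ N → ℤ}
    (hc : ∀ x (z : rootsOfUnity p Ω), ψ (.ofAdd (x.out • (θ z).toAdd)) = (x.out • (z : Ωˣ)) ^ c x)
    (β : kummerSubgroup N Ω p) (n : N) :
    ψ (.ofAdd (corestriction N (kummerCocycle hμ θ β) n)) =
      n • (∏ x, (x.out • (β : Ωˣ)) ^ c x) / ∏ x, (x.out • (β : Ωˣ)) ^ c x := by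
  have hconj (x : G ⧸ N) :
      x.out • (MulAut.conjNormal x.out⁻¹ n : N) • (β : Ωˣ) = n • x.out • (β : Ωˣ) := by
    simp only [Subgroup.smul_def, MulAut.conjNormal_apply, ← mul_smul, inv_inv, mul_assoc,
      mul_inv_cancel_left]
  rw [corestriction_coe, ofAdd_sum, map_prod, Finset.smul_prod', ← Finset.prod_div_distrib]
  refine Finset.prod_congr rfl fun x _ ↦ ?_
  rw [kummerCocycle, hc, coe_kummerHom_apply, smul_div', hconj, div_zpow, smul_zpow']

end CorestrictionKummer

section InfiniteGalois

variable {F Ω : Type*} [Field F] [Field Ω] [Algebra F Ω]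

theorem eventually_smul_eq_of_isOpen_stabilizer {G X : Type*} [Group G] [TopologicalSpace G]
    [MulAction G X] [Finite X] (h : ∀ x : X, IsOpen (MulAction.stabilizer G x : Set G)) :
    ∀ᶠ g in 𝓝 (1 : G), ∀ x : X, g • x = x :=
  eventually_all.mpr fun x ↦ (h x).mem_nhds (one_mem _)

theorem eventually_smul_units_eq [Algebra.IsIntegral F Ω] (u : Ωˣ) :
    ∀ᶠ σ in 𝓝 (1 : Gal(Ω/F)), σ • u = u :=
  mem_of_superset ((stabilizer_isOpen_of_isIntegral (u : Ω)).mem_nhds (one_mem _))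
    fun _ hσ ↦ Units.ext hσ

theorem exists_fixingSubgroup_smul_eq_and_smul_rootsOfUnity_eq [IsGalois F Ω] {M : Type*} [Finite M]
    [MulAction Gal(Ω/F) M] (hM : ∀ m : M, IsOpen (MulAction.stabilizer Gal(Ω/F) m : Set Gal(Ω/F)))
    (p : ℕ) [NeZero p] : ∃ L : FiniteGaloisIntermediateField F Ω,
      (∀ (n : L.fixingSubgroup) (m : M), n • m = m) ∧
        ∀ (n : L.fixingSubgroup) (z : rootsOfUnity p Ω), n • (z : Ωˣ) = z := by
  have htriv : ∀ᶠ σ in 𝓝 (1 : Gal(Ω/F)),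
      (∀ m : M, σ • m = m) ∧ ∀ z : rootsOfUnity p Ω, σ • (z : Ωˣ) = z :=
    (eventually_smul_eq_of_isOpen_stabilizer hM).and
      (eventually_all.mpr fun z ↦ eventually_smul_units_eq (z : Ωˣ))
  obtain ⟨L, hL⟩ := (InfiniteGalois.krullTopology_mem_nhds_one_iff_of_isGalois _).mp htriv
  exact ⟨L, fun n ↦ (hL n.2).1, fun n ↦ (hL n.2).2⟩

theorem exists_algebraMap_eq_of_forall_smul_eq [IsGalois F Ω] (L : IntermediateField F Ω) {u : Ωˣ}
    (hu : ∀ n : L.fixingSubgroup, n • u = u) : ∃ γ : L, algebraMap L Ω γ = u := by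
  have : (u : Ω) ∈ IntermediateField.fixedField L.fixingSubgroup :=
    fun n ↦ congrArg Units.val (hu n)
  rw [InfiniteGalois.fixedField_fixingSubgroup] at this
  exact ⟨⟨u, this⟩, rfl⟩

theorem exists_kummerSubgroup_fixingSubgroup_pow_eq [IsAlgClosed Ω] (L : IntermediateField F Ω)
    (p : ℕ) [NeZero p] {α : L} (hα : α ≠ 0) :
    ∃ β : kummerSubgroup L.fixingSubgroup Ω p, ((β : Ωˣ) : Ω) ^ p = algebraMap L Ω α := by
  obtain ⟨b, hb⟩ := IsAlgClosed.exists_pow_nat_eq (algebraMap L Ω α) (NeZero.pos p)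
  have hb₀ : b ≠ 0 := by
    rintro rfl
    rw [zero_pow (NeZero.ne p), eq_comm, map_eq_zero] at hb
    exact hα hb
  refine ⟨⟨Units.mk0 b hb₀, mem_kummerSubgroup.mpr fun n ↦ Units.ext ?_⟩, hb⟩
  change (n : Gal(Ω/F)) (b ^ p) = b ^ p
  rw [hb]
  exact n.2 α

theorem corestriction_kummerCocycle_mem_contCocycles [Algebra.IsIntegral F Ω] {M : Type*}
    [AddCommGroup M] [DistribMulAction Gal(Ω/F) M] {p : ℕ} {N : Subgroup Gal(Ω/F)} [N.Normal]
    [Fintype (Gal(Ω/F) ⧸ N)] (hN : IsOpen (N : Set Gal(Ω/F))) (hM : ∀ (n : N) (m : M), n • m = m)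
    (hμ : ∀ (n : N) (z : rootsOfUnity p Ω), n • (z : Ωˣ) = z)
    (θ : rootsOfUnity p Ω →* Multiplicative M) (β : kummerSubgroup N Ω p) :
    corestriction N (kummerCocycle hμ θ β) ∈ contCocycles Gal(Ω/F) M :=
  corestriction_mem_contCocycles hN (isCocycle₁_kummerCocycle hμ θ hM β) <|
    ((continuous_subtype_val.tendsto (1 : N)).eventually (eventually_smul_units_eq (β : Ωˣ))).mono
      fun _ ↦ kummerCocycle_eq_zero_of_smul_eq hμ θ

end InfiniteGalois

section KummerIndependence

variable {F Ω : Type*} [Field F] [Field Ω] [Algebra F Ω] [IsGalois F Ω]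
  {L : FiniteGaloisIntermediateField F Ω} [NumberField L]
  [Fintype (Gal(Ω/F) ⧸ L.fixingSubgroup)] {p : ℕ}

theorem dvd_of_forall_smul_prod_zpow_eq {α : L} {v : HeightOneSpectrum (𝓞 L)}
    (hα : IsIsolatedUniformizer F v α) {β : Ωˣ} (hβ : (β : Ω) ^ p = algebraMap L Ω α)
    {c : Gal(Ω/F) ⧸ L.fixingSubgroup → ℤ}
    (hc : ∀ n : L.fixingSubgroup, n • ∏ x, (x.out • β) ^ c x = ∏ x, (x.out • β) ^ c x) :
    (p : ℤ) ∣ c 1 := by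
  obtain ⟨γ, hγ⟩ := exists_algebraMap_eq_of_forall_smul_eq L.toIntermediateField hc
  let τ (x : Gal(Ω/F) ⧸ L.fixingSubgroup) : Gal(L/F) := AlgEquiv.restrictNormalHom L x.out
  have hτ (x) : τ x = 1 ↔ x = 1 := by
    rw [← FiniteGaloisIntermediateField.mem_fixingSubgroup_iff, ← QuotientGroup.eq_one_iff,
      QuotientGroup.out_eq']
  refine dvd_of_pow_eq_prod_zpow (v.valuation L) (α := fun x ↦ τ x α) (γ := γ) ?_
    (fun x hx ↦ hα.2 _ (mt (hτ x).mp hx)) ?_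
  · rw [(hτ 1).mpr rfl]
    exact hα.1
  · apply (algebraMap L Ω).injective
    have hcomm (x) : algebraMap L Ω (τ x α) = x.out (algebraMap L Ω α) :=
      AlgEquiv.restrictNormal_commutes x.out L α
    simp only [map_pow, map_prod, map_zpow₀, hcomm, hγ, ← hβ, Units.coe_prod,
      Units.val_zpow_eq_zpow_val, AlgEquiv.smul_units_def, ← Finset.prod_pow]
    exact Finset.prod_congr rfl fun x _ ↦ by rw [← zpow_natCast, zpow_comm, zpow_natCast]; rfl

variable {M : Type*} [AddCommGroup M] [DistribMulAction Gal(Ω/F) M]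

theorem exists_corestriction_kummerCocycle_ne_zero [NeZero p]
    (hM : ∀ (n : L.fixingSubgroup) (m : M), n • m = m)
    (hμ : ∀ (n : L.fixingSubgroup) (z : rootsOfUnity p Ω), n • (z : Ωˣ) = z)
    {θ : rootsOfUnity p Ω →* Multiplicative M} {ψ : Multiplicative M →* Ωˣ} (hψθ : ψ.comp θ ≠ 1)
    {α : L} {v : HeightOneSpectrum (𝓞 L)} (hα : IsIsolatedUniformizer F v α)
    {β : kummerSubgroup L.fixingSubgroup Ω p}
    (hβ : ((β : Ωˣ) : Ω) ^ p = algebraMap L Ω α) :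
    ∃ n : L.fixingSubgroup, corestriction L.fixingSubgroup (kummerCocycle hμ θ β) n ≠ 0 := by
  by_contra! hzero
  choose c hc using fun x : Gal(Ω/F) ⧸ L.fixingSubgroup ↦
    exists_forall_apply_smul_eq_smul_zpow θ ψ x.out
  have hdvd : (p : ℤ) ∣ c 1 := dvd_of_forall_smul_prod_zpow_eq hα hβ fun n ↦ by
    rw [← div_eq_one, ← apply_corestriction_kummerCocycle hμ θ ψ hc β n, hzero, ofAdd_zero, map_one]
  have hone : (1 : Gal(Ω/F) ⧸ L.fixingSubgroup).out ∈ L.fixingSubgroup := by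
    rw [← QuotientGroup.eq_one_iff, QuotientGroup.out_eq']
  refine hψθ (MonoidHom.ext fun z ↦ ?_)
  obtain ⟨k, hk⟩ := hdvd
  have hz := hc 1 z
  have hM₁ := hM ⟨_, hone⟩ (θ z).toAdd
  have hμ₁ := hμ ⟨_, hone⟩ z
  rw [Subgroup.mk_smul] at hM₁ hμ₁
  rw [hM₁, hμ₁, hk, zpow_mul, zpow_natCast, z.2, one_zpow] at hz
  exact hz

end KummerIndependence

/-- Let `F` be a number field and `M` a finite nontrivial continuous module for the
absolute Galois group `G_F = Gal(F̄/F)` (with its Krull topology; continuity of the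
action on the discrete module `M` means all stabilizers are open).  Then the continuous
cohomology group `H¹(G_F, M)`, realized as continuous cocycles modulo coboundaries,
is infinite. -/
theorem stmt_8 (F : Type*) [Field F] [NumberField F]
    (M : Type*) [AddCommGroup M] [Finite M] [Nontrivial M]
    [DistribMulAction (AlgebraicClosure F ≃ₐ[F] AlgebraicClosure F) M]
    (hcont : ∀ m : M,
      IsOpen (MulAction.stabilizer (AlgebraicClosure F ≃ₐ[F] AlgebraicClosure F) m
        : Set (AlgebraicClosure F ≃ₐ[F] AlgebraicClosure F))) :
    Infinite (Quot (cohomologous (AlgebraicClosure F ≃ₐ[F] AlgebraicClosure F) M)) := by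
  obtain ⟨p, hp, hpM⟩ := Nat.exists_prime_and_dvd (Finite.one_lt_card (α := M)).ne'
  have : Fact p.Prime := ⟨hp⟩
  have : CharZero (AlgebraicClosure F) :=
    charZero_of_injective_algebraMap (algebraMap F (AlgebraicClosure F)).injective
  obtain ⟨θ, ψ, hψθ⟩ :=
    exists_monoidHom_rootsOfUnity_comp_ne_one (AlgebraicClosure F) (Multiplicative M) hpM
  obtain ⟨L, hM, hμ⟩ := exists_fixingSubgroup_smul_eq_and_smul_rootsOfUnity_eq hcont p
  have : NumberField L := .of_module_finite F L
  have hN := L.toIntermediateField.fixingSubgroup_isOpen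
  have := Subgroup.quotient_finite_of_isOpen _ hN
  have := Fintype.ofFinite (Gal(AlgebraicClosure F/F) ⧸ L.fixingSubgroup)
  obtain ⟨a, ha₀, ha⟩ := exists_seq_isIsolatedUniformizer_div F (L := L)
  choose β hβ using fun n ↦ exists_kummerSubgroup_fixingSubgroup_pow_eq L.toIntermediateField p
    (RingOfIntegers.coe_ne_zero_iff.mpr (ha₀ n))
  refine .of_injective (fun n ↦ Quot.mk _
    ⟨_, corestriction_kummerCocycle_mem_contCocycles hN hM hμ θ (β n)⟩)
    (.of_lt_imp_ne fun m n hmn heq ↦ ?_)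
  obtain ⟨v, hv⟩ := ha m n hmn
  obtain ⟨σ, hσ⟩ := exists_corestriction_kummerCocycle_ne_zero hM hμ hψθ hv (β := β n / β m)
    (by simp [div_pow, hβ])
  rw [kummerCocycle_div, corestriction_sub] at hσ
  exact hσ (sub_eq_zero.mpr (eq_of_quotMk_cohomologous_eq heq (hM σ)).symm)
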